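/- arXiv:1812.07633 — 3 statements merged into one kernel-verified Lean document; each statement's English description precedes it below -/
import Mathlib

section
/- For all natural numbers m ≥ 1 and n ≥ 0, the following identity of rational numbers holds: 2^(m−1) · (n(n+1)/2)^m = ∑_{j=0}^{m−1, m−j odd} C(m, j) · ∑_{k=1}^{n} k^(m+j), where the outer sum ranges over those indices j with 0 ≤ j ≤ m−1 such that m − j is odd, and C(·,·) denotes the binomial coefficient. -/
open Finset

lemma key_odd_binom (m : ℕ) (x : ℚ) :
    (x + 1) ^ m - (x - 1) ^ m =
      2 * ∑ j ∈ (Finset.range m).filter (fun j => Odd (m - j)), (m.choose j : ℚ) * x ^ j := by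
  rw [sub_eq_add_neg x 1, add_pow, add_pow, ← Finset.sum_sub_distrib, Finset.sum_range_succ,
    Finset.sum_filter, Finset.mul_sum]
  simp only [Nat.sub_self, pow_zero, sub_self, add_zero]
  refine Finset.sum_congr rfl fun j _ => ?_
  split_ifs with h
  · rw [h.neg_one_pow, one_pow]; ring
  · rw [(Nat.not_odd_iff_even.mp h).neg_one_pow, one_pow]; ring

/-- For `m ≥ 1` and any `n`,
`2^(m-1) * (n(n+1)/2)^m = ∑_{0 ≤ j ≤ m-1, m - j odd} C(m, j) * ∑_{k=1}^n k^(m+j)`. -/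
theorem pow_triangular_eq_sum_odd_binom (m n : ℕ) (hm : 1 ≤ m) :
    (2 : ℚ) ^ (m - 1) * ((n * (n + 1) / 2 : ℚ)) ^ m =
      ∑ j ∈ (Finset.range m).filter (fun j => Odd (m - j)),
        (m.choose j : ℚ) * ∑ k ∈ Finset.Icc 1 n, (k : ℚ) ^ (m + j) := by
  have e : ∀ y : ℚ, (2 : ℚ) ^ (m - 1) * (y / 2) ^ m = y ^ m / 2 := by
    intro y
    obtain ⟨p, rfl⟩ : ∃ p, m = p + 1 := ⟨m - 1, by omega⟩
    rw [Nat.add_sub_cancel, div_pow, pow_succ (2 : ℚ)]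
    field_simp
  rw [e]
  induction n with
  | zero => simp [show m ≠ 0 by omega]
  | succ n ih =>
    simp only [Finset.sum_Icc_succ_top (Nat.le_add_left 1 n), mul_add _ _ (_ ^ _),
      Finset.sum_add_distrib]
    rw [← ih]
    have k := key_odd_binom m ((n : ℚ) + 1)
    have h2 : ∑ j ∈ (Finset.range m).filter (fun j => Odd (m - j)),
        (m.choose j : ℚ) * (((n + 1 : ℕ) : ℚ)) ^ (m + j) = ((n : ℚ) + 1) ^ m *
        ∑ j ∈ (Finset.range m).filter (fun j => Odd (m - j)),
          (m.choose j : ℚ) * ((n : ℚ) + 1) ^ j := by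
      rw [Finset.mul_sum]
      refine Finset.sum_congr rfl fun j _ => ?_
      push_cast
      ring
    rw [h2]
    push_cast
    rw [add_sub_cancel_right] at k
    rw [mul_pow, mul_pow]
    linear_combination (((n : ℚ) + 1) ^ m / 2) * k
end

section
/- (Faulhaber's Formula.) For every natural number m ≥ 3 there exists a polynomial P with rational coefficients, of degree m − 1 and with leading coefficient 2^m/(m+1), such that for every natural number n, ∑_{k=1}^{n} k^(2m+1) = P(n(n+1)/2) · (∑_{k=1}^{n} k)^2, where all arithmetic is in the rational numbers. -/
open Finset Polynomial

lemma fa_pairs (f : ℕ → ℚ) (k : ℕ) :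
    ∑ j ∈ range (2 * k), f j = ∑ i ∈ range k, (f (2 * i) + f (2 * i + 1)) := by
  induction k with
  | zero => simp
  | succ k ih =>
    rw [show 2 * (k + 1) = 2 * k + 1 + 1 by ring, sum_range_succ, sum_range_succ, sum_range_succ, ih]
    ring

lemma fa_binom (m : ℕ) (x : ℚ) :
    (x + 1) ^ (m + 1) - (x - 1) ^ (m + 1) =
      ∑ i ∈ range (m / 2 + 1), 2 * ((m + 1).choose (2 * i + 1) : ℚ) * x ^ (m - 2 * i) := by
  set f : ℕ → ℚ := fun j => (1 - (-1) ^ j) * ((m + 1).choose j : ℚ) * x ^ (m + 1 - j) with hf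
  have h1 : (x + 1) ^ (m + 1) - (x - 1) ^ (m + 1) = ∑ j ∈ range (m + 2), f j := by
    rw [add_comm x 1, show x - 1 = -1 + x by ring, add_pow, add_pow, ← sum_sub_distrib]
    refine sum_congr rfl fun j _ => ?_
    simp only [hf, one_pow]; ring
  have h2 : ∑ j ∈ range (m + 2), f j = ∑ j ∈ range (2 * (m / 2 + 1)), f j := by
    rcases Nat.even_or_odd' m with ⟨c, rfl | rfl⟩
    · congr 2; omega
    · rw [sum_range_succ, show 2 * ((2 * c + 1) / 2 + 1) = 2 * c + 1 + 1 by omega]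
      have : f (2 * c + 1 + 1) = 0 := by
        have : ((-1 : ℚ)) ^ (2 * c + 1 + 1) = 1 := Even.neg_one_pow ⟨c + 1, by ring⟩
        simp [hf, this]
      rw [this, add_zero]
  rw [h1, h2, fa_pairs]
  refine sum_congr rfl fun i _ => ?_
  have e1 : ((-1 : ℚ)) ^ (2 * i) = 1 := Even.neg_one_pow ⟨i, by ring⟩
  simp only [hf, pow_succ, e1, Nat.add_sub_add_right]
  ring

lemma fa_tele (m n : ℕ) :
    2 ^ m * ((n : ℚ) * (n + 1) / 2) ^ (m + 1) =
      ∑ i ∈ range (m / 2 + 1), ((m + 1).choose (2 * i + 1) : ℚ) *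
        ∑ k ∈ Icc 1 n, (k : ℚ) ^ (2 * (m - i) + 1) := by
  induction n with
  | zero => simp
  | succ n ih =>
    simp only [sum_Icc_succ_top (Nat.le_add_left 1 n), mul_add, sum_add_distrib]
    rw [← ih]
    have hb := fa_binom m ((n : ℚ) + 1)
    have : ∑ i ∈ range (m / 2 + 1), ((m + 1).choose (2 * i + 1) : ℚ) *
        ((n + 1 : ℕ) : ℚ) ^ (2 * (m - i) + 1) =
        ((n : ℚ) + 1) ^ (m + 1) / 2 * (((n : ℚ) + 1 + 1) ^ (m + 1) - ((n : ℚ) + 1 - 1) ^ (m + 1)) := by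
      rw [hb, mul_sum]
      refine sum_congr rfl fun i hi => ?_
      have hi := mem_range.1 hi
      rw [show 2 * (m - i) + 1 = (m + 1) + (m - 2 * i) by omega, pow_add]
      push_cast; ring
    rw [this]
    push_cast
    simp only [← mul_add, add_sub_cancel_right, div_pow, mul_pow]
    field_simp
    ring

lemma fa_sum (n : ℕ) : ∑ k ∈ Icc 1 n, (k : ℚ) = (n : ℚ) * (n + 1) / 2 := by
  induction n with
  | zero => simp
  | succ n ih => rw [sum_Icc_succ_top (Nat.le_add_left 1 n), ih]; push_cast; ring

lemma fa_main (m : ℕ) : 1 ≤ m →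
    ∃ P : Polynomial ℚ, P.natDegree ≤ m - 1 ∧ P.coeff (m - 1) = 2 ^ m / (m + 1) ∧
      ∀ n : ℕ, ∑ k ∈ Finset.Icc 1 n, (k : ℚ) ^ (2 * m + 1) =
          P.eval ((n : ℚ) * (n + 1) / 2) * ((n : ℚ) * (n + 1) / 2) ^ 2 := by
  induction m using Nat.strong_induction_on with
  | _ m ih =>
  intro hm
  choose! P hd _ he using ih
  have hm0 : (m : ℚ) + 1 ≠ 0 := by positivity
  set Q : Polynomial ℚ := ∑ i ∈ range (m / 2),
    C (((m + 1).choose (2 * (i + 1) + 1) : ℚ)) * P (m - (i + 1)) with hQ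
  have hc : ∀ j, m - 1 ≤ j → Q.coeff j = 0 := by
    intro j hj
    rw [hQ, finset_sum_coeff]
    refine sum_eq_zero fun i hi => ?_
    have hi := mem_range.1 hi
    rw [coeff_C_mul, coeff_eq_zero_of_natDegree_lt, mul_zero]
    have := hd (m - (i + 1)) (by omega) (by omega)
    omega
  refine ⟨C (2 ^ m / ((m : ℚ) + 1)) * X ^ (m - 1) - C (1 / ((m : ℚ) + 1)) * Q, ?_, ?_, ?_⟩
  · rw [natDegree_le_iff_coeff_eq_zero]
    intro j hj
    rw [coeff_sub, coeff_C_mul, coeff_C_mul, coeff_X_pow, hc j hj.le, if_neg (by omega)]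
    simp
  · rw [coeff_sub, coeff_C_mul, coeff_C_mul, coeff_X_pow, hc _ le_rfl]
    simp
  · intro n
    have ht := fa_tele m n
    rw [sum_range_succ'] at ht
    set T : ℚ := (n : ℚ) * (n + 1) / 2 with hT
    have hQe : Q.eval T * T ^ 2 = ∑ i ∈ range (m / 2), ((m + 1).choose (2 * (i + 1) + 1) : ℚ) *
        ∑ k ∈ Icc 1 n, (k : ℚ) ^ (2 * (m - (i + 1)) + 1) := by
      rw [hQ, eval_finset_sum, sum_mul]
      refine sum_congr rfl fun i hi => ?_
      have hi := mem_range.1 hi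
      rw [he (m - (i + 1)) (by omega) (by omega) n, eval_mul, eval_C, mul_assoc]
    rw [← hQe] at ht
    simp only [mul_zero, zero_add, Nat.choose_one_right, Nat.sub_zero] at ht
    push_cast at ht
    have hp : T ^ (m + 1) = T ^ (m - 1) * T ^ 2 := by
      rw [← pow_add]; congr 1; omega
    rw [hp] at ht
    simp only [eval_sub, eval_mul, eval_C, eval_pow, eval_X]
    field_simp
    linarith

/-- Faulhaber's Formula: for `m ≥ 3` there is a polynomial `P` over `ℚ` of degree `m − 1`
with leading coefficient `2^m/(m+1)` such that for all `n`,
`∑_{k=1}^n k^(2m+1) = P(n(n+1)/2) * (∑_{k=1}^n k)^2`. -/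
theorem faulhaber_formula (m : ℕ) (hm : 3 ≤ m) :
    ∃ P : Polynomial ℚ, P.natDegree = m - 1 ∧ P.leadingCoeff = 2 ^ m / (m + 1) ∧
      ∀ n : ℕ,
        ∑ k ∈ Finset.Icc 1 n, (k : ℚ) ^ (2 * m + 1) =
          P.eval ((n : ℚ) * (n + 1) / 2) * (∑ k ∈ Finset.Icc 1 n, (k : ℚ)) ^ 2 := by
  obtain ⟨P, hd, hc, he⟩ := fa_main m (by omega)
  have hne : P.coeff (m - 1) ≠ 0 := by rw [hc]; positivity
  have hdeg : P.natDegree = m - 1 := le_antisymm hd (le_natDegree_of_ne_zero hne)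
  refine ⟨P, hdeg, ?_, fun n => ?_⟩
  · rw [leadingCoeff, hdeg, hc]
  · rw [fa_sum, he]
end

section
/- For every natural number m ≥ 3 there exists a polynomial Q with rational coefficients such that for every natural number n, ∑_{k=1}^{n} k^(2m+1) = (n(n+1)/2)^2 · Q(n); in particular, the polynomial in n expressing ∑_{k=1}^{n} k^(2m+1) has no linear term in n. -/
open Finset Polynomial

theorem aux_dvd (m : ℕ) (hm : 3 ≤ m) :
    (X ^ 2 * (1 - X) ^ 2 : ℚ[X]) ∣
      Polynomial.bernoulli (2 * m + 2) - C (_root_.bernoulli (2 * m + 2)) := by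
  have h1 : (X ^ 2 : ℚ[X]) ∣
      Polynomial.bernoulli (2 * m + 2) - C (_root_.bernoulli (2 * m + 2)) := by
    rw [X_pow_dvd_iff]
    intro d hd
    have hb : _root_.bernoulli (2 * m + 1) = 0 :=
      bernoulli_eq_zero_of_odd ⟨m, rfl⟩ (by omega)
    interval_cases d
    · simp [coeff_bernoulli]
    · simp [coeff_bernoulli, coeff_C, hb]
  refine IsCoprime.mul_dvd ?_ h1 ?_
  · apply IsCoprime.pow
    exact ⟨1, 1, by ring⟩
  · obtain ⟨A, hA⟩ := h1
    refine ⟨A.comp (1 - X), ?_⟩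
    have h2 := congrArg (fun p : ℚ[X] => p.comp (1 - X)) hA
    simp only [sub_comp, bernoulli_comp_one_sub_X, C_comp, mul_comp, pow_comp, X_comp] at h2
    rw [← h2, Even.neg_one_pow ⟨m + 1, by ring⟩]
    simp

/-- For `m ≥ 3` there is a polynomial `Q` over `ℚ` such that for all `n`,
`∑_{k=1}^n k^(2m+1) = (n(n+1)/2)^2 * Q(n)`; in particular, any polynomial in `n`
expressing `∑_{k=1}^n k^(2m+1)` has no linear term. -/
theorem sum_odd_pow_square_factor (m : ℕ) (hm : 3 ≤ m) :
    (∃ Q : Polynomial ℚ, ∀ n : ℕ,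
        ∑ k ∈ Finset.Icc 1 n, (k : ℚ) ^ (2 * m + 1) =
          ((n : ℚ) * (n + 1) / 2) ^ 2 * Q.eval (n : ℚ)) ∧
      ∀ R : Polynomial ℚ,
        (∀ n : ℕ, ∑ k ∈ Finset.Icc 1 n, (k : ℚ) ^ (2 * m + 1) = R.eval (n : ℚ)) →
          R.coeff 1 = 0 := by
  have key : ∃ Q : Polynomial ℚ, ∀ n : ℕ,
        ∑ k ∈ Finset.Icc 1 n, (k : ℚ) ^ (2 * m + 1) =
          ((n : ℚ) * (n + 1) / 2) ^ 2 * Q.eval (n : ℚ) := by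
    obtain ⟨A, hA⟩ := aux_dvd m hm
    refine ⟨C (4 / (2 * m + 2 : ℚ)) * A.comp (X + 1), fun n => ?_⟩
    have hs : ∑ k ∈ Finset.Icc 1 n, (k : ℚ) ^ (2 * m + 1) =
        ∑ k ∈ Finset.range (n + 1), (k : ℚ) ^ (2 * m + 1) := by
      rw [Finset.range_eq_Ico, Finset.sum_eq_sum_Ico_succ_bot (by omega)]
      simp
      rfl
    have h3 := sum_range_pow_eq_bernoulli_sub (n + 1) (2 * m + 1)
    have h4 := congrArg (eval ((n : ℚ) + 1)) hA
    simp only [eval_sub, eval_mul, eval_pow, eval_X, eval_C, eval_one] at h4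
    rw [← hs] at h3
    push_cast at h3
    rw [show (2 * m + 1).succ = 2 * m + 2 from rfl, h4] at h3
    have h5 : (2 * m + 2 : ℚ) ≠ 0 := by positivity
    simp only [eval_mul, eval_C, eval_comp, eval_add, eval_X, eval_one]
    apply mul_left_cancel₀ h5
    field_simp
    linear_combination 4 * h3
  refine ⟨key, fun R hR => ?_⟩
  obtain ⟨Q, hQ⟩ := key
  have hRQ : R = X ^ 2 * (C (1 / 4) * (X + 1) ^ 2 * Q) := by
    apply Polynomial.eq_of_infinite_eval_eq
    refine (Set.infinite_range_of_injective (Nat.cast_injective (R := ℚ))).mono ?_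
    rintro _ ⟨n, rfl⟩
    simp only [Set.mem_ofPred_eq, ← hR n, hQ n, eval_mul, eval_pow, eval_X, eval_C, eval_add,
      eval_one]
    ring
  exact X_pow_dvd_iff.1 ⟨_, hRQ⟩ 1 (by norm_num)
end
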